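/- Let $\lambda^{(1)},\dots,\lambda^{(k)}$ be rank-one real $d\times d$ matrices, and define self-adjoint operators $T_i = \sum_{j=1}^d X_j \otimes S_{i,j}$ on $H \otimes \mathbb{C}^k$, where $X_1,\dots,X_d$ are self-adjoint operators on $H$ and $S_{i,j} = \mathrm{diag}(\lambda^{(1)}_{i,j},\dots,\lambda^{(k)}_{i,j})$. Then $T_iT_n = T_nT_i$ for all $1 \leq i,n \leq d$. -/

import Mathlib

lemma exists_rank_one_factor {d : ℕ} (A : Matrix (Fin d) (Fin d) ℝ) (h : A.rank = 1) :
    ∃ a b : Fin d → ℝ, ∀ i j, A i j = a i * b j := by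
  rw [Matrix.rank] at h
  obtain ⟨v, -, hv⟩ := finrank_eq_one_iff'.1 h
  choose c hc using fun j => hv ⟨A.mulVecLin (Pi.single j 1), LinearMap.mem_range_self _ _⟩
  refine ⟨v.1, c, fun i j => ?_⟩
  have := congrFun (congrArg Subtype.val (hc j)) i
  simp at this
  rw [mul_comm, this]


/-- If each `λ⁽ᵖ⁾` is a rank-one real `d × d` matrix and
`Tᵢ = ∑ⱼ Xⱼ ⊗ S_{i,j}` on `H ⊗ ℂᵏ ≅ ⊕ₚ H`, where
`S_{i,j} = diag(λ⁽¹⁾_{i,j},…,λ⁽ᵏ⁾_{i,j})` (so the `p`-th component of `Tᵢ h` is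
`∑ⱼ λ⁽ᵖ⁾_{i,j} Xⱼ (h p)`), then the `Tᵢ` pairwise commute. -/
theorem stmt_8 (d k : ℕ) {H : Type} [NormedAddCommGroup H] [InnerProductSpace ℂ H] [CompleteSpace H]
    (lam : Fin k → Matrix (Fin d) (Fin d) ℝ)
    (hrank : ∀ p, (lam p).rank = 1)
    (X : Fin d → H →L[ℂ] H) (hX : ∀ j, IsSelfAdjoint (X j))
    (T : Fin d → (Fin k → H) → (Fin k → H))
    (hT : ∀ i h p, T i h p = ∑ j, (lam p i j : ℂ) • X j (h p)) :
    ∀ i n, T i ∘ T n = T n ∘ T i := by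


  intro i n
  funext h p
  obtain ⟨a, b, hab⟩ := exists_rank_one_factor (lam p) (hrank p)
  have key : ∀ i h, T i h p = (a i : ℂ) • (∑ j, (b j : ℂ) • X j) (h p) := by
    intro i h
    rw [hT]
    simp [hab, Finset.smul_sum, mul_smul]
  simp only [Function.comp_apply, key, map_smul]
  rw [smul_comm]
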